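/- arXiv:1808.01922 — 4 statements merged into one kernel-verified Lean document; each statement's English description precedes it below -/
import Mathlib

section
/- Let A be a Hopf algebra over a field k with bijective antipode which is weakly finite (for every n ≥ 1 and all x, y ∈ M_n(A), xy = 1 implies yx = 1). Then for every right group-like projection P ∈ A one has N_P = V_P. -/
open scoped TensorProduct

noncomputable section

variable (k : Type*) [Field k] {A : Type*} [Ring A] [HopfAlgebra k A]

/-- `P` is a right group-like projection: a nonzero idempotent with
`Δ(P)(1 ⊗ P) = P ⊗ P = (1 ⊗ P)Δ(P)`. -/
def IsRightGroupLikeProjection (P : A) : Prop :=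
  P ≠ 0 ∧ P * P = P ∧
    Coalgebra.comul (R := k) P * ((1 : A) ⊗ₜ[k] P) = P ⊗ₜ[k] P ∧
    ((1 : A) ⊗ₜ[k] P) * Coalgebra.comul (R := k) P = P ⊗ₜ[k] P

/-- `P` is a left group-like projection: a nonzero idempotent with
`Δ(P)(P ⊗ 1) = P ⊗ P = (P ⊗ 1)Δ(P)`. -/
def IsLeftGroupLikeProjection (P : A) : Prop :=
  P ≠ 0 ∧ P * P = P ∧
    Coalgebra.comul (R := k) P * (P ⊗ₜ[k] (1 : A)) = P ⊗ₜ[k] P ∧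
    (P ⊗ₜ[k] (1 : A)) * Coalgebra.comul (R := k) P = P ⊗ₜ[k] P

/-- A two-sided group-like projection. -/
def IsTwoSidedGroupLikeProjection (P : A) : Prop :=
  IsRightGroupLikeProjection k P ∧ IsLeftGroupLikeProjection k P

/-- `N_P^l = {x : (1 ⊗ P)Δ(x) = x ⊗ P}`. -/
def NPlSet (P : A) : Set A :=
  {x : A | ((1 : A) ⊗ₜ[k] P) * Coalgebra.comul (R := k) x = x ⊗ₜ[k] P}

/-- `N_P^r = {x : Δ(x)(1 ⊗ P) = x ⊗ P}`. -/
def NPrSet (P : A) : Set A :=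
  {x : A | Coalgebra.comul (R := k) x * ((1 : A) ⊗ₜ[k] P) = x ⊗ₜ[k] P}

/-- `N_P = N_P^l ∩ N_P^r`. -/
def NPSet (P : A) : Set A := NPlSet k P ∩ NPrSet k P

/-- `V_P = {(μ ⊗ id)(Δ(P)) : μ ∈ A*}`, the smallest left coideal containing `P`. -/
def VPSet (P : A) : Set A :=
  {x : A | ∃ μ : A →ₗ[k] k,
    x = TensorProduct.lid k A ((TensorProduct.map μ LinearMap.id) (Coalgebra.comul (R := k) P))}

/-- A submodule `N ⊆ A` is a left coideal if `Δ(N) ⊆ A ⊗ N`. -/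
def IsLeftCoideal (N : Submodule k A) : Prop :=
  ∀ x ∈ N, Coalgebra.comul (R := k) x ∈
    LinearMap.range (TensorProduct.map (LinearMap.id : A →ₗ[k] A) N.subtype)

/-- A subalgebra `N ⊆ A` is a left coideal subalgebra if `Δ(N) ⊆ A ⊗ N`. -/
def IsLeftCoidealSubalgebra (N : Subalgebra k A) : Prop :=
  IsLeftCoideal k (Subalgebra.toSubmodule N)

/-!
The inclusion `V_P ⊆ N_P` is coassociativity, and the antipode gives `N_P V_P ⊆ V_P`, so everything
reduces to `1 ∈ V_P`.

The space `B = k1 + V_P` is a finite-dimensional left coideal subalgebra of `A`, and `I = V_P` is an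
idempotent two-sided ideal of `B`. Let `Y` be a simple `B`-module for which the quotient of
`h = dim Hom_B(I, Y)` by `d = dim Y` is as large as possible. By Nakayama's lemma there is then a
surjection `g : B ^ h → I ^ d`. The coaction followed by the action on `Y`, respectively by the maps
`I → Y`, turns elements of `B` and of `I` into `d × d` and `d × h` matrices over `A`. In these
coordinates `g` becomes a surjection between free `A`-modules of rank `hd`, which is injective
because `A` is weakly finite, so that `ker g` is killed by the action matrices. Since
`Δ(b)(1 ⊗ P) = b ⊗ P` and the action matrix of `P` is nonzero, only `0` has zero action matrix.
Hence `g` is bijective, and `I I ^ d = I ^ d` yields `I B ^ h = B ^ h`, that is, `1 ∈ I`.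
-/

section Modules

variable {R : Type*} [Ring R]
  {E F X Y : Type*} [AddCommGroup E] [Module R E] [AddCommGroup F] [Module R F]
  [AddCommGroup X] [Module R X] [AddCommGroup Y] [Module R Y]

theorem exists_comp_eq_of_ker_le_ker [IsSemisimpleModule R F] {g : E →ₗ[R] F} {f : E →ₗ[R] Y}
    (h : LinearMap.ker g ≤ LinearMap.ker f) : ∃ f' : F →ₗ[R] Y, f' ∘ₗ g = f := by
  obtain ⟨f', hf'⟩ := IsSemisimpleModule.extension_property (LinearMap.range g).subtype
    (Submodule.subtype_injective _)
    ((LinearMap.ker g).liftQ f h ∘ₗ g.quotKerEquivRange.symm.toLinearMap)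
  refine ⟨f', LinearMap.ext fun x => ?_⟩
  have hx := LinearMap.congr_fun hf' ⟨g x, LinearMap.mem_range_self g x⟩
  rw [LinearMap.comp_apply, LinearMap.comp_apply, LinearEquiv.coe_coe,
    LinearMap.quotKerEquivRange_symm_apply_image] at hx
  exact hx

theorem exists_isMaximal_surjective_quotient (R X : Type*) [Ring R] [AddCommGroup X] [Module R X]
    [Module.Finite R X] [Nontrivial X] :
    ∃ I : Ideal R, I.IsMaximal ∧ ∃ π : X →ₗ[R] R ⧸ I, Function.Surjective π := by
  obtain ⟨N, hN, -⟩ := (eq_top_or_exists_le_coatom (⊥ : Submodule R X)).resolve_left bot_ne_top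
  obtain ⟨I, hI, ⟨e⟩⟩ := isSimpleModule_iff_quot_maximal.mp (isSimpleModule_iff_isCoatom.mpr hN)
  exact ⟨I, hI, e.toLinearMap ∘ₗ N.mkQ, e.surjective.comp N.mkQ_surjective⟩

theorem exists_isMaximal_leftInverse_of_not_surjective [Module.Finite R F] [IsSemisimpleModule R F]
    {g : E →ₗ[R] F} (hg : ¬ Function.Surjective g) :
    ∃ I : Ideal R, I.IsMaximal ∧ ∃ (h : F →ₗ[R] R ⧸ I) (s : R ⧸ I →ₗ[R] F),
      h ∘ₗ g = 0 ∧ h ∘ₗ s = LinearMap.id := by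
  have : Nontrivial (F ⧸ LinearMap.range g) :=
    Submodule.Quotient.nontrivial_iff.mpr fun h => hg (LinearMap.range_eq_top.mp h)
  obtain ⟨I, hI, π, hπ⟩ := exists_isMaximal_surjective_quotient R (F ⧸ LinearMap.range g)
  let h : F →ₗ[R] R ⧸ I := π ∘ₗ (LinearMap.range g).mkQ
  have hh : Function.Surjective h := hπ.comp (Submodule.mkQ_surjective _)
  have : IsSemisimpleModule R (R ⧸ I) := .of_surjective h hh
  obtain ⟨s, hs⟩ := IsSemisimpleModule.lifting_property h hh LinearMap.id
  exact ⟨I, hI, h, s, by rw [LinearMap.comp_assoc, LinearMap.range_mkQ_comp, LinearMap.comp_zero],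
    hs⟩

theorem range_lt_range_add_comp [IsSimpleModule R Y] {g : E →ₗ[R] F} {h : F →ₗ[R] Y}
    {s : Y →ₗ[R] F} (hg : h ∘ₗ g = 0) (hs : h ∘ₗ s = LinearMap.id) {f : E →ₗ[R] Y}
    (hf : ¬ LinearMap.ker g ≤ LinearMap.ker f) :
    LinearMap.range g < LinearMap.range (g + s ∘ₗ f) := by
  obtain ⟨x, hx, hfx⟩ := SetLike.not_le_iff_exists.mp hf
  have hs_le : LinearMap.range s ≤ LinearMap.range (g + s ∘ₗ f) := by
    rintro _ ⟨y, rfl⟩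
    obtain ⟨c, rfl⟩ := IsSimpleModule.toSpanSingleton_surjective R hfx y
    exact ⟨c • x, by simp [LinearMap.mem_ker.mp hx]⟩
  refine SetLike.lt_iff_le_and_exists.mpr ⟨?_, s (f x), hs_le ⟨_, rfl⟩, ?_⟩
  · rintro _ ⟨z, rfl⟩
    simpa using Submodule.sub_mem _ (LinearMap.mem_range_self (g + s ∘ₗ f) z) (hs_le ⟨f z, rfl⟩)
  · rintro ⟨z, hz⟩
    have : h (g z) = f x := by rw [hz]; exact LinearMap.congr_fun hs (f x)
    exact hfx (this.symm.trans (LinearMap.congr_fun hg z))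

theorem exists_surjective_of_surjective_quotient_jacobson [Module.Finite R F]
    [Module.Projective R E] {g : E →ₗ[R] F ⧸ Module.jacobson R F} (hg : Function.Surjective g) :
    ∃ g' : E →ₗ[R] F, Function.Surjective g' := by
  obtain ⟨g', rfl⟩ := Module.projective_lifting_property (Module.jacobson R F).mkQ g
    (Submodule.mkQ_surjective _)
  refine ⟨g', LinearMap.range_eq_top.mp ?_⟩
  by_contra hne
  obtain ⟨M, hM, hgM⟩ := (eq_top_or_exists_le_coatom (LinearMap.range g')).resolve_left hne
  have hJM : Module.jacobson R F ≤ M := sInf_le hM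
  refine hM.1 (eq_top_iff.mpr fun y _ => ?_)
  obtain ⟨x, hx⟩ := hg ((Module.jacobson R F).mkQ y)
  simpa using M.sub_mem (hgM ⟨x, rfl⟩) (hJM ((Submodule.Quotient.eq _).mp hx))

theorem isSemisimpleModule_quotient_jacobson [IsArtinian R F] :
    IsSemisimpleModule R (F ⧸ Module.jacobson R F) :=
  (IsArtinian.isSemisimpleModule_iff_jacobson R _).mpr (Module.jacobson_quotient_jacobson R F)

end Modules

section Dimension

variable {R : Type*} [Ring R] [Algebra k R]
  {E F X Y : Type*}
  [AddCommGroup E] [Module k E] [Module R E] [IsScalarTower k R E]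
  [AddCommGroup F] [Module k F] [Module R F] [IsScalarTower k R F]
  [AddCommGroup X] [Module k X] [Module R X] [IsScalarTower k R X]
  [AddCommGroup Y] [Module k Y] [Module R Y] [IsScalarTower k R Y]

variable (R E F) in
theorem finite_linearMap_of_isScalarTower [Module.Finite k E] [Module.Finite k F] :
    Module.Finite k (E →ₗ[R] F) :=
  Module.Finite.of_injective (LinearMap.restrictScalarsₗ k R E F k)
    (LinearMap.restrictScalars_injective k)

variable (R E F) in
theorem finrank_linearMap_le [Module.Finite k E] [Module.Finite k F] :
    Module.finrank k (E →ₗ[R] F) ≤ Module.finrank k E * Module.finrank k F :=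
  (LinearMap.finrank_le_finrank_of_injective (f := LinearMap.restrictScalarsₗ k R E F k)
    (LinearMap.restrictScalars_injective k)).trans (Module.finrank_linearMap k k E F).le

theorem finrank_linearMap_le_of_surjective {Z : Type*} [AddCommGroup Z] [Module R Z]
    [Module.Finite k E] [Module.Finite k Y] {p : E →ₗ[R] Z} (hp : Function.Surjective p) :
    Module.finrank k (Z →ₗ[R] Y) ≤ Module.finrank k (E →ₗ[R] Y) :=
  have := finite_linearMap_of_isScalarTower k R E Y
  LinearMap.finrank_le_finrank_of_injective (f := LinearMap.lcomp k Y p)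
    fun _ _ h => (LinearMap.cancel_right hp).mp h

variable (R X Y) in
theorem finrank_linearMap_pi (ι : Type*) [Fintype ι] [Module.Finite k X] [Module.Finite k Y] :
    Module.finrank k ((ι → X) →ₗ[R] Y) = Fintype.card ι * Module.finrank k (X →ₗ[R] Y) := by
  classical
  have := finite_linearMap_of_isScalarTower k R X Y
  simp [← (LinearMap.lsum R (fun _ : ι => X) k (M := Y)).finrank_eq, Module.finrank_pi_fintype]

variable (R Y) in
theorem finrank_linearMap_pi_self (ι : Type*) [Fintype ι] [Module.Finite k Y] :
    Module.finrank k ((ι → R) →ₗ[R] Y) = Fintype.card ι * Module.finrank k Y := by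
  simp [← ((Pi.basisFun R ι).constr k (M' := Y)).finrank_eq, Module.finrank_pi_fintype]

theorem exists_not_ker_le_ker_of_finrank_le [Module.Finite k E] [Module.Finite k F]
    [Module.Finite k Y] [IsSemisimpleModule R F] {g : E →ₗ[R] F} {h : F →ₗ[R] Y}
    (hle : Module.finrank k (F →ₗ[R] Y) ≤ Module.finrank k (E →ₗ[R] Y))
    (h0 : h ≠ 0) (hg : h ∘ₗ g = 0) :
    ∃ f : E →ₗ[R] Y, ¬ LinearMap.ker g ≤ LinearMap.ker f := by
  have := finite_linearMap_of_isScalarTower k R E Y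
  have := finite_linearMap_of_isScalarTower k R F Y
  by_contra! hker
  have hsurj : Function.Surjective (LinearMap.lcomp k Y g) := fun f =>
    exists_comp_eq_of_ker_le_ker (hker f)
  have hinj : Function.Injective (LinearMap.lcomp k Y g) :=
    (LinearMap.injective_iff_surjective_of_finrank_eq_finrank
      (hle.antisymm (LinearMap.finrank_le_finrank_of_surjective hsurj))).mpr hsurj
  exact h0 (hinj (hg.trans (map_zero (LinearMap.lcomp k Y g)).symm))

theorem exists_surjective_of_finrank_le_of_isSemisimpleModule [Module.Finite k R]
    [Module.Finite k E] [Module.Finite k F] [IsSemisimpleModule R F]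
    (h : ∀ I : Ideal R, I.IsMaximal →
      Module.finrank k (F →ₗ[R] R ⧸ I) ≤ Module.finrank k (E →ₗ[R] R ⧸ I)) :
    ∃ g : E →ₗ[R] F, Function.Surjective g := by
  have : IsNoetherian R F := isNoetherian_of_tower k inferInstance
  obtain ⟨_, ⟨g, rfl⟩, hmax⟩ := set_has_maximal_iff_noetherian.mpr this
    (Set.range fun g : E →ₗ[R] F => LinearMap.range g) ⟨_, 0, rfl⟩
  refine ⟨g, of_not_not fun hg => ?_⟩
  obtain ⟨I, hI, p, s, hpg, hps⟩ := exists_isMaximal_leftInverse_of_not_surjective hg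
  have : IsSimpleModule R (R ⧸ I) := isSimpleModule_iff_isCoatom.mpr hI.out
  have hp : p ≠ 0 := by
    rintro rfl
    obtain ⟨y, hy⟩ := @exists_ne _ (IsSimpleModule.nontrivial R (R ⧸ I)) 0
    exact hy (LinearMap.congr_fun hps y).symm
  obtain ⟨f, hf⟩ := exists_not_ker_le_ker_of_finrank_le k (h I hI) hp hpg
  exact hmax _ ⟨_, rfl⟩ (range_lt_range_add_comp hpg hps hf)

theorem exists_surjective_of_finrank_le [Module.Finite k R] [Module.Finite k E]
    [Module.Projective R E] [Module.Finite k F]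
    (h : ∀ I : Ideal R, I.IsMaximal →
      Module.finrank k (F →ₗ[R] R ⧸ I) ≤ Module.finrank k (E →ₗ[R] R ⧸ I)) :
    ∃ g : E →ₗ[R] F, Function.Surjective g := by
  have : Module.Finite R F := .of_restrictScalars_finite k R F
  have : IsArtinian R F := isArtinian_of_tower k inferInstance
  have := isSemisimpleModule_quotient_jacobson (R := R) (F := F)
  obtain ⟨g, hg⟩ := exists_surjective_of_finrank_le_of_isSemisimpleModule k
    (E := E) (F := F ⧸ Module.jacobson R F) fun I hI =>
      (finrank_linearMap_le_of_surjective k (Submodule.mkQ_surjective _)).trans (h I hI)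
  exact exists_surjective_of_surjective_quotient_jacobson hg

variable (R X) in
theorem exists_isMaximal_finrank_mul_le [Module.Finite k R] [Module.Finite k X] [Nontrivial X] :
    ∃ I : Ideal R, I.IsMaximal ∧ 0 < Module.finrank k (X →ₗ[R] R ⧸ I) ∧
      ∀ J : Ideal R, J.IsMaximal →
        Module.finrank k (R ⧸ I) * Module.finrank k (X →ₗ[R] R ⧸ J) ≤
          Module.finrank k (X →ₗ[R] R ⧸ I) * Module.finrank k (R ⧸ J) := by
  let hom (I : Ideal R) : ℕ := Module.finrank k (X →ₗ[R] R ⧸ I)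
  let dim (I : Ideal R) : ℕ := Module.finrank k (R ⧸ I)
  have hdim (I : Ideal R) : dim I ≤ Module.finrank k R :=
    LinearMap.finrank_le_finrank_of_surjective (f := I.mkQ.restrictScalars k) I.mkQ_surjective
  have hfin : ((fun I => (hom I, dim I)) '' {I | I.IsMaximal}).Finite := by
    refine (Set.finite_Iic (Module.finrank k X * Module.finrank k R, Module.finrank k R)).subset ?_
    rintro _ ⟨I, -, rfl⟩
    exact ⟨(finrank_linearMap_le k R X (R ⧸ I)).trans (Nat.mul_le_mul_left _ (hdim I)), hdim I⟩
  have : Module.Finite R X := .of_restrictScalars_finite k R X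
  obtain ⟨J, hJ, π, hπ⟩ := exists_isMaximal_surjective_quotient R X
  obtain ⟨_, ⟨I, hI, rfl⟩, hmax⟩ := Set.exists_max_image _ (fun p => (p.1 : ℚ) / p.2) hfin
    ⟨_, J, hJ, rfl⟩
  have hdim_pos {I : Ideal R} (hI : I.IsMaximal) : 0 < dim I :=
    have : Nontrivial (R ⧸ I) := Submodule.Quotient.nontrivial_iff.mpr hI.ne_top
    Module.finrank_pos
  have hle (J : Ideal R) (hJ : J.IsMaximal) : dim I * hom J ≤ hom I * dim J := by
    have := hmax _ ⟨J, hJ, rfl⟩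
    rw [div_le_div_iff₀ (by exact_mod_cast hdim_pos hJ) (by exact_mod_cast hdim_pos hI)] at this
    rw [mul_comm]
    exact_mod_cast this
  refine ⟨I, hI, ?_, hle⟩
  have hhom : 0 < hom J := by
    have := finite_linearMap_of_isScalarTower k R X (R ⧸ J)
    have : Nontrivial (R ⧸ J) := Submodule.Quotient.nontrivial_iff.mpr hJ.ne_top
    refine Module.finrank_pos_iff_exists_ne_zero.mpr ⟨π, ?_⟩
    rintro rfl
    obtain ⟨y, hy⟩ := exists_ne (0 : R ⧸ J)
    obtain ⟨x, rfl⟩ := hπ y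
    exact hy rfl
  exact Nat.pos_of_mul_pos_right ((Nat.mul_pos (hdim_pos hI) hhom).trans_le (hle J hJ))

variable (R X) in
theorem exists_isMaximal_surjective_pi [Module.Finite k R] [Module.Finite k X] [Nontrivial X] :
    ∃ I : Ideal R, I.IsMaximal ∧ 0 < Module.finrank k (X →ₗ[R] R ⧸ I) ∧
      ∃ g : (Fin (Module.finrank k (X →ₗ[R] R ⧸ I)) → R) →ₗ[R]
        (Fin (Module.finrank k (R ⧸ I)) → X), Function.Surjective g := by
  obtain ⟨I, hI, hpos, hle⟩ := exists_isMaximal_finrank_mul_le k R X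
  refine ⟨I, hI, hpos, exists_surjective_of_finrank_le k fun J hJ => ?_⟩
  rw [finrank_linearMap_pi, finrank_linearMap_pi_self, Fintype.card_fin, Fintype.card_fin]
  exact hle J hJ

end Dimension

section StablyFinite

variable {S B X m n ι κ : Type*} [Ring S] [Ring B] [AddCommGroup X] [Module B X]
  [Fintype m] [Fintype ι]

theorem row_apply_eq_linearCombination [DecidableEq ι] {ρ : B → Matrix m m S}
    {U : X →+ Matrix m n S} (hU : ∀ b x, U (b • x) = ρ b * U x) (g : (ι → B) →ₗ[B] (κ → X))
    (v : ι → B) (a : m) :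
    (fun l => U (g v l) a) =
      Fintype.linearCombination S (fun (p : ι × m) l => U (g (Pi.single p.1 1) l) p.2)
        fun p => ρ (v p.1) a p.2 := by
  have hv : g v = ∑ j, v j • g (Pi.single j 1) := by
    conv_lhs => rw [pi_eq_sum_univ' v, map_sum]
    simp only [map_smul]
  ext l i
  simp [hv, hU, Fintype.linearCombination_apply, Fintype.sum_prod_type, Matrix.sum_apply,
    Matrix.mul_apply]

theorem linearCombination_row_surjective [DecidableEq ι] [Finite κ] {ρ : B → Matrix m m S}
    {U : X →+ Matrix m n S} (hU : ∀ b x, U (b • x) = ρ b * U x)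
    (hspan : Submodule.span S (Set.range fun p : X × m => U p.1 p.2) = ⊤)
    {g : (ι → B) →ₗ[B] (κ → X)} (hg : Function.Surjective g) :
    Function.Surjective
      (Fintype.linearCombination S fun (p : ι × m) l => U (g (Pi.single p.1 1) l) p.2) := by
  classical
  have := Fintype.ofFinite κ
  set Φ := Fintype.linearCombination S fun (p : ι × m) l => U (g (Pi.single p.1 1) l) p.2
  have hsingle (l : κ) (w : n → S) : Pi.single l w ∈ LinearMap.range Φ := by
    have hle : Submodule.span S (Set.range fun p : X × m => U p.1 p.2) ≤
        (LinearMap.range Φ).comap (LinearMap.single S (fun _ : κ => n → S) l) := by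
      rw [Submodule.span_le]
      rintro _ ⟨⟨x, a⟩, rfl⟩
      obtain ⟨v, hv⟩ := hg (Pi.single l x)
      refine ⟨_, (row_apply_eq_linearCombination hU g v a).symm.trans ?_⟩
      funext l'
      rw [hv]
      obtain rfl | hl := eq_or_ne l' l
      · simp
      · simp only [LinearMap.single_apply, Pi.single_eq_of_ne hl, map_zero]
        rfl
    exact hle (hspan ▸ Submodule.mem_top)
  intro w
  rw [← Finset.univ_sum_single w]
  exact Submodule.sum_mem _ fun l _ => hsingle l (w l)

theorem map_eq_zero_of_surjective [IsStablyFiniteRing S] [Fintype n] [Fintype κ]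
    {ρ : B → Matrix m m S} {U : X →+ Matrix m n S} (hU : ∀ b x, U (b • x) = ρ b * U x)
    (hspan : Submodule.span S (Set.range fun p : X × m => U p.1 p.2) = ⊤)
    {g : (ι → B) →ₗ[B] (κ → X)} (hg : Function.Surjective g)
    (hcard : Fintype.card ι * Fintype.card m = Fintype.card κ * Fintype.card n)
    {v : ι → B} (hv : g v = 0) (j : ι) : ρ (v j) = 0 := by
  classical
  let Φ := Fintype.linearCombination S fun (p : ι × m) l => U (g (Pi.single p.1 1) l) p.2
  let e : (κ → n → S) ≃ₗ[S] (ι × m → S) := (LinearEquiv.curry S S κ n).symm ≪≫ₗ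
    LinearEquiv.funCongrLeft S S (Fintype.equivOfCardEq (by simpa using hcard))
  have hinj : Function.Injective Φ := by
    refine .of_comp (f := e) (Module.End.injective_of_surjective _ _ (f := e.toLinearMap ∘ₗ Φ) ?_)
    exact e.surjective.comp (linearCombination_row_surjective hU hspan hg)
  ext a c
  have hrow : (fun p : ι × m => ρ (v p.1) a p.2) = 0 := hinj <| by
    rw [map_zero, ← row_apply_eq_linearCombination hU g v a, hv]
    ext
    simp
  exact congrFun hrow (j, c)

end StablyFinite

theorem eq_top_of_bijective_of_smul_top_eq_top {R X ι κ : Type*} [Ring R] [AddCommGroup X]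
    [Module R X] [Nonempty ι] [Finite κ] {I : Ideal R} [I.IsTwoSided] {g : (ι → R) →ₗ[R] (κ → X)}
    (hg : Function.Bijective g) (hX : I • (⊤ : Submodule R X) = ⊤) : I = ⊤ := by
  classical
  have := Fintype.ofFinite κ
  let e := LinearEquiv.ofBijective g hg
  have hsingle (l : κ) (x : X) (i : ι) : e.symm (Pi.single l x) i ∈ I := by
    have hle : I • (⊤ : Submodule R X) ≤ Submodule.comap
        (LinearMap.proj i ∘ₗ e.symm.toLinearMap ∘ₗ LinearMap.single R (fun _ : κ => X) l) I := by
      refine Submodule.smul_le.mpr fun v hv w _ => ?_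
      rw [Submodule.mem_comap, map_smul]
      exact I.mul_mem_right _ hv
    exact hle (hX.ge Submodule.mem_top)
  obtain ⟨i⟩ := ‹Nonempty ι›
  rw [Ideal.eq_top_iff_one]
  have h := congrFun (e.symm_apply_apply 1) i
  rw [← Finset.univ_sum_single (e 1), map_sum, Finset.sum_apply] at h
  rw [← Pi.one_apply (M := fun _ => R) i, ← h]
  exact I.sum_mem fun l _ => hsingle l _ i

section Slices

variable {R C M N : Type*} [CommSemiring R] [AddCommMonoid C] [Module R C]
  [AddCommMonoid M] [Module R M] [AddCommMonoid N] [Module R N]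

/-- The slice map `μ ⊗ id : C ⊗ M → M` of a functional `μ` on `C`. -/
def leftSlice (μ : C →ₗ[R] R) : C ⊗[R] M →ₗ[R] M :=
  (TensorProduct.lid R M).toLinearMap ∘ₗ μ.rTensor M

variable (C) in
/-- The slice map `id ⊗ f : C ⊗ M → C` of a functional `f` on `M`. -/
def rightSlice (f : M →ₗ[R] R) : C ⊗[R] M →ₗ[R] C :=
  (TensorProduct.rid R C).toLinearMap ∘ₗ f.lTensor C

@[simp]
theorem leftSlice_tmul (μ : C →ₗ[R] R) (c : C) (m : M) : leftSlice μ (c ⊗ₜ[R] m) = μ c • m := by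
  simp [leftSlice]

@[simp]
theorem rightSlice_tmul (f : M →ₗ[R] R) (c : C) (m : M) :
    rightSlice C f (c ⊗ₜ[R] m) = f m • c := by
  simp [rightSlice]

theorem apply_rightSlice (μ : C →ₗ[R] R) (f : M →ₗ[R] R) (t : C ⊗[R] M) :
    μ (rightSlice C f t) = f (leftSlice μ t) :=
  LinearMap.congr_fun (f := μ ∘ₗ rightSlice C f) (g := f ∘ₗ leftSlice μ)
    (by ext; simp [mul_comm]) t

theorem leftSlice_lTensor (μ : C →ₗ[R] R) (p : M →ₗ[R] N) (t : C ⊗[R] M) :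
    leftSlice μ (p.lTensor C t) = p (leftSlice μ t) :=
  LinearMap.congr_fun (f := leftSlice μ ∘ₗ p.lTensor C) (g := p ∘ₗ leftSlice μ)
    (by ext; simp) t

theorem leftSlice_rTensor {D : Type*} [AddCommMonoid D] [Module R D] (μ : D →ₗ[R] R)
    (f : C →ₗ[R] D) (t : C ⊗[R] M) : leftSlice μ (f.rTensor M t) = leftSlice (μ ∘ₗ f) t := by
  simp only [leftSlice, LinearMap.rTensor_comp, LinearMap.comp_apply]

theorem mem_range_lTensor_of_leftSlice_mem_range {K C M N : Type*} [Field K] [AddCommGroup C]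
    [Module K C] [AddCommGroup M] [Module K M] [AddCommGroup N] [Module K N] {ι : N →ₗ[K] M}
    {t : C ⊗[K] M} (h : ∀ μ, leftSlice μ t ∈ LinearMap.range ι) :
    t ∈ LinearMap.range (ι.lTensor C) := by
  classical
  let b := Module.Basis.ofVectorSpace K C
  obtain ⟨c, rfl⟩ := TensorProduct.eq_repr_basis_left b t
  refine Submodule.sum_mem _ fun i _ => ?_
  have hi : leftSlice (b.coord i) (c.sum fun j m => b j ⊗ₜ[K] m) = c i := by
    rw [Finsupp.sum, map_sum]
    simp +contextual [Finsupp.single_apply, eq_comm]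
  obtain ⟨n, hn⟩ := hi ▸ h (b.coord i)
  exact ⟨b i ⊗ₜ n, by simp [hn]⟩

theorem leftSlice_smul {S : Type*} [Semiring S] [Algebra R S] (μ : S →ₗ[R] R) (a : S)
    (t : S ⊗[R] M) : leftSlice μ (a • t) = leftSlice (μ ∘ₗ LinearMap.mulLeft R a) t := by
  induction t with
  | zero => simp
  | add t₁ t₂ h₁ h₂ => simp only [smul_add, map_add, h₁, h₂]
  | tmul b m => simp [TensorProduct.smul_tmul']

theorem rightSlice_smul {S : Type*} [Semiring S] [Algebra R S] (f : M →ₗ[R] R) (a : S)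
    (t : S ⊗[R] M) : rightSlice S f (a • t) = a * rightSlice S f t := by
  induction t with
  | zero => simp
  | add t₁ t₂ h₁ h₂ => simp only [smul_add, map_add, mul_add, h₁, h₂]
  | tmul b m => simp [TensorProduct.smul_tmul']

theorem leftSlice_mul_one_tmul {S T : Type*} [Semiring S] [Algebra R S] [Semiring T] [Algebra R T]
    (μ : S →ₗ[R] R) (t : S ⊗[R] T) (b : T) :
    leftSlice μ (t * 1 ⊗ₜ b) = leftSlice μ t * b := by
  induction t with
  | zero => simp
  | add t₁ t₂ h₁ h₂ => simp only [add_mul, map_add, h₁, h₂]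
  | tmul a c => simp

theorem leftSlice_one_tmul_mul {S T : Type*} [Semiring S] [Algebra R S] [Semiring T] [Algebra R T]
    (μ : S →ₗ[R] R) (b : T) (t : S ⊗[R] T) :
    leftSlice μ (1 ⊗ₜ b * t) = b * leftSlice μ t := by
  induction t with
  | zero => simp
  | add t₁ t₂ h₁ h₂ => simp only [mul_add, map_add, h₁, h₂]
  | tmul a c => simp

theorem leftSlice_mul_mem_mul {S T : Type*} [Semiring S] [Algebra R S] [Semiring T] [Algebra R T]
    {U V : Submodule R T} {s t : S ⊗[R] T} (hs : s ∈ LinearMap.range (U.subtype.lTensor S))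
    (ht : t ∈ LinearMap.range (V.subtype.lTensor S)) (μ : S →ₗ[R] R) :
    leftSlice μ (s * t) ∈ U * V := by
  obtain ⟨s, rfl⟩ := hs
  obtain ⟨t, rfl⟩ := ht
  induction s with
  | zero => simp
  | add s₁ s₂ h₁ h₂ => simpa only [map_add, add_mul] using Submodule.add_mem _ h₁ h₂
  | tmul a v =>
    induction t with
    | zero => simp
    | add t₁ t₂ h₁ h₂ => simpa only [map_add, mul_add] using Submodule.add_mem _ h₁ h₂
    | tmul b w => simpa using Submodule.smul_mem _ (μ (a * b)) (Submodule.mul_mem_mul v.2 w.2)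

theorem rTensor_mul_one_tmul {S S' T : Type*} [Semiring S] [Algebra R S] [Semiring S']
    [Algebra R S'] [Semiring T] [Algebra R T] (f : S →ₗ[R] S') (t : S ⊗[R] T) (b : T) :
    f.rTensor T (t * 1 ⊗ₜ b) = f.rTensor T t * 1 ⊗ₜ b := by
  induction t with
  | zero => simp
  | add t₁ t₂ h₁ h₂ => simp only [add_mul, map_add, h₁, h₂]
  | tmul a c => simp

theorem rTensor_one_tmul_mul {S S' T : Type*} [Semiring S] [Algebra R S] [Semiring S']
    [Algebra R S'] [Semiring T] [Algebra R T] (f : S →ₗ[R] S') (b : T) (t : S ⊗[R] T) :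
    f.rTensor T (1 ⊗ₜ b * t) = 1 ⊗ₜ b * f.rTensor T t := by
  induction t with
  | zero => simp
  | add t₁ t₂ h₁ h₂ => simp only [mul_add, map_add, h₁, h₂]
  | tmul a c => simp

end Slices

section Coactions

open Coalgebra

variable {R C M : Type*} [CommSemiring R] [AddCommMonoid C] [Module R C] [Coalgebra R C]
  [AddCommMonoid M] [Module R M]

/-- `δ : M → C ⊗ M` makes `M` a left comodule over the coalgebra `C`. -/
structure IsLeftCoaction (δ : M →ₗ[R] C ⊗[R] M) : Prop where
  assoc_rTensor_comul (m : M) : TensorProduct.assoc R C C M (comul.rTensor M (δ m)) =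
    δ.lTensor C (δ m)
  rTensor_counit (m : M) : counit.rTensor M (δ m) = 1 ⊗ₜ m

theorem isLeftCoaction_comul : IsLeftCoaction (comul : C →ₗ[R] C ⊗[R] C) where
  assoc_rTensor_comul := coassoc_apply
  rTensor_counit := rTensor_counit_comul

namespace IsLeftCoaction

variable {δ : M →ₗ[R] C ⊗[R] M}

theorem leftSlice_counit (hδ : IsLeftCoaction δ) (m : M) : leftSlice counit (δ m) = m := by
  simp [leftSlice, hδ.rTensor_counit]

theorem leftSlice_coaction (hδ : IsLeftCoaction δ) (μ : C →ₗ[R] R) (m : M) :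
    δ (leftSlice μ (δ m)) = (leftSlice μ ∘ₗ comul).rTensor M (δ m) := by
  have h : leftSlice μ ∘ₗ (TensorProduct.assoc R C C M).toLinearMap =
      (leftSlice μ).rTensor M := by
    ext
    simp [TensorProduct.smul_tmul']
  rw [← leftSlice_lTensor, ← hδ.assoc_rTensor_comul, LinearMap.rTensor_comp_apply, ← h]
  rfl

theorem rightSlice_leftSlice (hδ : IsLeftCoaction δ) (f : M →ₗ[R] R) (μ : C →ₗ[R] R) (m : M) :
    rightSlice C f (δ (leftSlice μ (δ m))) = leftSlice μ (comul (rightSlice C f (δ m))) := by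
  have h : rightSlice C f ∘ₗ (leftSlice μ ∘ₗ comul).rTensor M =
      leftSlice μ ∘ₗ comul ∘ₗ rightSlice C f := by
    ext
    simp
  rw [hδ.leftSlice_coaction]
  exact LinearMap.congr_fun h (δ m)

end IsLeftCoaction

end Coactions

section AntipodeCoact

open Coalgebra HopfAlgebra

variable {R H M : Type*} [CommSemiring R] [Semiring H] [HopfAlgebra R H]
  [AddCommMonoid M] [Module R M]

/-- The map `h ⊗ m ↦ (S(h) ⊗ 1)δ(m)`. It undoes the coaction `δ`, in the sense of
`IsLeftCoaction.antipodeCoact_apply`. -/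
def antipodeCoact (δ : M →ₗ[R] H ⊗[R] M) : H ⊗[R] M →ₗ[R] H ⊗[R] M :=
  TensorProduct.lift
    (((Algebra.lsmul R R (H ⊗[R] M)).toLinearMap ∘ₗ antipode R).compl₂ δ)

@[simp]
theorem antipodeCoact_tmul (δ : M →ₗ[R] H ⊗[R] M) (h : H) (m : M) :
    antipodeCoact δ (h ⊗ₜ m) = antipode R h • δ m :=
  rfl

theorem antipodeCoact_comul_mul_one_tmul (t : H ⊗[R] H) (b : H) :
    antipodeCoact comul (t * 1 ⊗ₜ b) = antipodeCoact comul t * comul b := by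
  induction t with
  | zero => simp
  | add t₁ t₂ h₁ h₂ => simp only [add_mul, map_add, h₁, h₂]
  | tmul a c => simp [Bialgebra.comul_mul, smul_mul_assoc]

theorem IsLeftCoaction.antipodeCoact_apply {δ : M →ₗ[R] H ⊗[R] M} (hδ : IsLeftCoaction δ) (m : M) :
    antipodeCoact δ (δ m) = 1 ⊗ₜ m := by
  let contract : H ⊗[R] (H ⊗[R] M) →ₗ[R] H ⊗[R] M :=
    TensorProduct.lift ((Algebra.lsmul R R (H ⊗[R] M)).toLinearMap ∘ₗ antipode R)
  have hlTensor : antipodeCoact δ = contract ∘ₗ δ.lTensor H := by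
    ext
    simp [contract]
  have hassoc : contract ∘ₗ (TensorProduct.assoc R H H M).toLinearMap =
      (LinearMap.mul' R H ∘ₗ (antipode R).rTensor H).rTensor M := by
    ext
    simp [contract, TensorProduct.smul_tmul']
  calc antipodeCoact δ (δ m)
      = contract (TensorProduct.assoc R H H M (comul.rTensor M (δ m))) := by
        rw [hlTensor, LinearMap.comp_apply, hδ.assoc_rTensor_comul]
    _ = (LinearMap.mul' R H ∘ₗ (antipode R).rTensor H ∘ₗ comul).rTensor M (δ m) := by
        rw [← LinearMap.comp_assoc, LinearMap.rTensor_comp_apply, ← hassoc]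
        rfl
    _ = (Algebra.linearMap R H).rTensor M (counit.rTensor M (δ m)) := by
        rw [mul_antipode_rTensor_comul, LinearMap.rTensor_comp_apply]
    _ = 1 ⊗ₜ m := by simp [hδ.rTensor_counit]

end AntipodeCoact

section Restriction

open Coalgebra

variable {k}
variable {C M N : Type*} [AddCommGroup C] [Module k C] [AddCommGroup M] [Module k M]
  [AddCommGroup N] [Module k N]

/-- The restriction of a coaction on `M` along an embedding `ι : N → M` whose image is a
subcomodule. -/
def restrictCoaction (δ : M →ₗ[k] C ⊗[k] M) (ι : N →ₗ[k] M) (hι : Function.Injective ι)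
    (hδι : ∀ n, δ (ι n) ∈ LinearMap.range (ι.lTensor C)) : N →ₗ[k] C ⊗[k] N :=
  (δ ∘ₗ ι).codRestrictOfInjective (ι.lTensor C)
    (Module.Flat.lTensor_preserves_injective_linearMap ι hι) hδι

variable {δ : M →ₗ[k] C ⊗[k] M} {ι : N →ₗ[k] M} {hι : Function.Injective ι}
  {hδι : ∀ n, δ (ι n) ∈ LinearMap.range (ι.lTensor C)}

@[simp]
theorem lTensor_restrictCoaction (n : N) :
    ι.lTensor C (restrictCoaction δ ι hι hδι n) = δ (ι n) :=
  LinearMap.codRestrictOfInjective_comp_apply ..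

theorem apply_leftSlice_restrictCoaction (μ : C →ₗ[k] k) (n : N) :
    ι (leftSlice μ (restrictCoaction δ ι hι hδι n)) = leftSlice μ (δ (ι n)) := by
  rw [← leftSlice_lTensor, lTensor_restrictCoaction]

theorem IsLeftCoaction.restrictCoaction [Coalgebra k C] (hδ : IsLeftCoaction δ) :
    IsLeftCoaction (restrictCoaction δ ι hι hδι) where
  assoc_rTensor_comul n := by
    have hinj : Function.Injective ((ι.lTensor C).lTensor C) :=
      Module.Flat.lTensor_preserves_injective_linearMap _
        (Module.Flat.lTensor_preserves_injective_linearMap ι hι)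
    have hassoc : (ι.lTensor C).lTensor C ∘ₗ (TensorProduct.assoc k C C N).toLinearMap =
        (TensorProduct.assoc k C C M).toLinearMap ∘ₗ ι.lTensor (C ⊗[k] C) := by
      ext
      simp
    have hcomp : ι.lTensor C ∘ₗ _root_.restrictCoaction δ ι hι hδι = δ ∘ₗ ι :=
      LinearMap.ext lTensor_restrictCoaction
    have hcomul : ι.lTensor (C ⊗[k] C) ∘ₗ comul.rTensor N = comul.rTensor M ∘ₗ ι.lTensor C := by
      rw [LinearMap.lTensor_comp_rTensor, LinearMap.rTensor_comp_lTensor]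
    refine hinj ?_
    calc (ι.lTensor C).lTensor C (TensorProduct.assoc k C C N (comul.rTensor N _))
        = TensorProduct.assoc k C C M (ι.lTensor (C ⊗[k] C) (comul.rTensor N _)) :=
          LinearMap.congr_fun hassoc _
      _ = TensorProduct.assoc k C C M (comul.rTensor M (δ (ι n))) := by
          rw [← lTensor_restrictCoaction (hι := hι) (hδι := hδι)]
          exact congrArg _ (LinearMap.congr_fun hcomul _)
      _ = δ.lTensor C (ι.lTensor C (_root_.restrictCoaction δ ι hι hδι n)) := by
          rw [hδ.assoc_rTensor_comul, lTensor_restrictCoaction]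
      _ = _ := by
          rw [← LinearMap.lTensor_comp_apply, ← hcomp, LinearMap.lTensor_comp_apply]
  rTensor_counit n := by
    refine Module.Flat.lTensor_preserves_injective_linearMap (M := k) ι hι ?_
    rw [← LinearMap.comp_apply, LinearMap.lTensor_comp_rTensor, ← LinearMap.rTensor_comp_lTensor,
      LinearMap.comp_apply, lTensor_restrictCoaction, hδ.rTensor_counit, LinearMap.lTensor_tmul]

end Restriction

theorem linearIndependent_repr_apply {k B X Y m n : Type*} [Field k] [Ring B] [Algebra k B]
    [AddCommGroup X] [Module B X] [AddCommGroup Y] [Module k Y] [Module B Y] [IsScalarTower k B Y]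
    (e : Module.Basis m k Y) {φ : n → X →ₗ[B] Y} (hφ : LinearIndependent k φ) :
    LinearIndependent k fun i (p : X × m) => e.repr (φ i p.1) p.2 := by
  refine hφ.map' (M' := X × m → k)
    { toFun := fun ψ p => e.repr (ψ p.1) p.2
      map_add' := fun _ _ => by ext; simp
      map_smul' := fun _ _ => by ext; simp } ?_
  rw [LinearMap.ker_eq_bot']
  intro ψ hψ
  ext x
  exact e.repr.map_eq_zero_iff.mp (Finsupp.ext fun a => congrFun hψ (x, a))

section RelativeHopfModules

open Coalgebra HopfAlgebra

variable {k}
variable {B X : Type*} [Ring B] [Algebra k B]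
  [AddCommGroup X] [Module k X] [Module B X] [IsScalarTower k B X]

variable (A B X) in
/-- The action of `A ⊗ B` on `A ⊗ X` induced by an action of `B` on `X`. -/
def tensorAct : A ⊗[k] B →ₗ[k] A ⊗[k] X →ₗ[k] A ⊗[k] X :=
  TensorProduct.map₂ (LinearMap.mul k A) (Algebra.lsmul k k X).toLinearMap

@[simp]
theorem tensorAct_tmul (a a' : A) (b : B) (x : X) :
    tensorAct A B X (a ⊗ₜ[k] b) (a' ⊗ₜ[k] x) = (a * a') ⊗ₜ (b • x) :=
  rfl

/-- `X` is a relative Hopf module over the left `A`-comodule algebra `B`: a `B`-module and an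
`A`-comodule such that `δ(bx) = δ(b)δ(x)`. -/
structure IsRelativeHopfModule (δB : B →ₗ[k] A ⊗[k] B) (δX : X →ₗ[k] A ⊗[k] X) : Prop
    extends IsLeftCoaction δX where
  coaction_smul (b : B) (x : X) : δX (b • x) = tensorAct A B X (δB b) (δX x)

theorem isRelativeHopfModule_restrictCoaction {ιB : B →ₗ[k] A} {ιX : X →ₗ[k] A}
    (hιB : Function.Injective ιB) (hB : ∀ b, comul (ιB b) ∈ LinearMap.range (ιB.lTensor A))
    (hιX : Function.Injective ιX) (hX : ∀ x, comul (ιX x) ∈ LinearMap.range (ιX.lTensor A))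
    (hsmul : ∀ (b : B) (x : X), ιX (b • x) = ιB b * ιX x) :
    IsRelativeHopfModule (restrictCoaction comul ιB hιB hB) (restrictCoaction comul ιX hιX hX) where
  toIsLeftCoaction := isLeftCoaction_comul.restrictCoaction
  coaction_smul b x := by
    have hact (s : A ⊗[k] B) (t : A ⊗[k] X) :
        ιX.lTensor A (tensorAct A B X s t) = ιB.lTensor A s * ιX.lTensor A t := by
      induction s with
      | zero => simp
      | add s₁ s₂ h₁ h₂ => simp only [map_add, add_mul, LinearMap.add_apply, h₁, h₂]
      | tmul a b =>
        induction t with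
        | zero => simp
        | add t₁ t₂ h₁ h₂ => simp only [map_add, mul_add, h₁, h₂]
        | tmul a' x => simp [hsmul]
    refine Module.Flat.lTensor_preserves_injective_linearMap (M := A) ιX hιX ?_
    simp only [hact, lTensor_restrictCoaction, hsmul, Bialgebra.comul_mul]

variable {Y m n : Type*} [AddCommGroup Y] [Module k Y] [Module B Y] [IsScalarTower k B Y]

/-- The matrix of `X → A ⊗ X → A ⊗ Y = A ^ m`, with one column for each map in the family
`φ : n → Hom_B(X, Y)`, where `Y` is identified with `k ^ m` by the basis `e`. -/
def coactionMatrix (δ : X →ₗ[k] A ⊗[k] X) (e : Module.Basis m k Y) (φ : n → X →ₗ[B] Y) :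
    X →ₗ[k] Matrix m n A where
  toFun x := .of fun a i => rightSlice A (e.coord a ∘ₗ (φ i).restrictScalars k) (δ x)
  map_add' _ _ := by ext; simp
  map_smul' _ _ := by ext; simp

/-- The action of `B` on `Y`, with coefficients in `A`: the matrix of `B → A ⊗ B → A ⊗ End_k(Y)`
in the basis `e` of `Y`. -/
def actionMatrix (δ : B →ₗ[k] A ⊗[k] B) (e : Module.Basis m k Y) : B →ₗ[k] Matrix m m A :=
  coactionMatrix δ e fun c => LinearMap.toSpanSingleton B Y (e c)

theorem coactionMatrix_apply (δ : X →ₗ[k] A ⊗[k] X) (e : Module.Basis m k Y) (φ : n → X →ₗ[B] Y)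
    (x : X) (a : m) (i : n) :
    coactionMatrix δ e φ x a i = rightSlice A (e.coord a ∘ₗ (φ i).restrictScalars k) (δ x) :=
  rfl

theorem actionMatrix_apply (δ : B →ₗ[k] A ⊗[k] B) (e : Module.Basis m k Y) (b : B) (a c : m) :
    actionMatrix δ e b a c = rightSlice A
      (e.coord a ∘ₗ (LinearMap.toSpanSingleton B Y (e c)).restrictScalars k) (δ b) :=
  rfl

theorem IsRelativeHopfModule.coactionMatrix_smul [Fintype m] {δB : B →ₗ[k] A ⊗[k] B}
    {δX : X →ₗ[k] A ⊗[k] X} (hX : IsRelativeHopfModule δB δX) (e : Module.Basis m k Y)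
    (φ : n → X →ₗ[B] Y) (b : B) (x : X) :
    coactionMatrix δX e φ (b • x) = actionMatrix δB e b * coactionMatrix δX e φ x := by
  have h (a : m) (i : n) (s : A ⊗[k] B) (t : A ⊗[k] X) :
      rightSlice A (e.coord a ∘ₗ (φ i).restrictScalars k) (tensorAct A B X s t) =
        ∑ c, rightSlice A (e.coord a ∘ₗ
            (LinearMap.toSpanSingleton B Y (e c)).restrictScalars k) s *
          rightSlice A (e.coord c ∘ₗ (φ i).restrictScalars k) t := by
    induction s with
    | zero => simp
    | add s₁ s₂ h₁ h₂ =>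
      simp only [map_add, LinearMap.add_apply, add_mul, Finset.sum_add_distrib, h₁, h₂]
    | tmul a' b =>
      induction t with
      | zero => simp
      | add t₁ t₂ h₁ h₂ => simp only [map_add, mul_add, Finset.sum_add_distrib, h₁, h₂]
      | tmul a'' x =>
        have hbx : b • φ i x = ∑ c, e.repr (φ i x) c • b • e c := by
          conv_lhs => rw [← e.sum_repr (φ i x), Finset.smul_sum]
          simp only [smul_comm b]
        simp [hbx, Finset.sum_smul, mul_smul]
  ext a i
  rw [coactionMatrix_apply, hX.coaction_smul, h, Matrix.mul_apply]
  rfl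

theorem IsLeftCoaction.span_coactionMatrix_eq_top [Finite n] {δ : X →ₗ[k] A ⊗[k] X}
    (hδ : IsLeftCoaction δ) (e : Module.Basis m k Y) {φ : n → X →ₗ[B] Y}
    (hφ : LinearIndependent k φ) :
    Submodule.span A (Set.range fun p : X × m => coactionMatrix δ e φ p.1 p.2) = ⊤ := by
  set W := Submodule.span A (Set.range fun p : X × m => coactionMatrix δ e φ p.1 p.2)
  have hmem (a : m) (t : A ⊗[k] X) :
      (fun i => rightSlice A (e.coord a ∘ₗ (φ i).restrictScalars k) (antipodeCoact δ t)) ∈ W := by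
    induction t with
    | zero => simpa only [map_zero] using! W.zero_mem
    | add t₁ t₂ h₁ h₂ => simpa only [map_add] using! W.add_mem h₁ h₂
    | tmul a' x =>
      simpa only [antipodeCoact_tmul, rightSlice_smul] using!
        W.smul_mem (antipode k a') (Submodule.subset_span ⟨(x, a), rfl⟩)
  have hmap (w : n → k) : (Algebra.linearMap k A).compLeft n w ∈ W := by
    have hle : Submodule.span k (Set.range fun (p : X × m) i => e.repr (φ i p.1) p.2) ≤
        (W.restrictScalars k).comap ((Algebra.linearMap k A).compLeft n) := by
      rw [Submodule.span_le]
      rintro _ ⟨⟨x, a⟩, rfl⟩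
      have h := hmem a (δ x)
      simp only [hδ.antipodeCoact_apply, rightSlice_tmul, ← Algebra.algebraMap_eq_smul_one] at h
      exact h
    have htop := span_flip_eq_top_iff_linearIndependent.mpr (linearIndependent_repr_apply e hφ)
    exact hle (htop.ge Submodule.mem_top)
  classical
  have := Fintype.ofFinite n
  refine eq_top_iff.mpr fun w _ => ?_
  rw [pi_eq_sum_univ' w]
  refine W.sum_mem fun i _ => W.smul_mem _ ?_
  convert hmap (Pi.single i 1) using 1
  ext j
  obtain rfl | hj := eq_or_ne i j
  · simp
  · simp [hj.symm]

end RelativeHopfModules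

section ActionMatrix

variable {k}
variable {B Y m : Type*} [Ring B] [Algebra k B] [AddCommGroup Y] [Module k Y] [Module B Y]
  [IsScalarTower k B Y] {δ : B →ₗ[k] A ⊗[k] B} (e : Module.Basis m k Y)

theorem IsRelativeHopfModule.actionMatrix_mul [Fintype m] (hδ : IsRelativeHopfModule δ δ)
    (b c : B) : actionMatrix δ e (b * c) = actionMatrix δ e b * actionMatrix δ e c :=
  hδ.coactionMatrix_smul e _ b c

variable {e}

theorem IsLeftCoaction.actionMatrix_leftSlice_eq_zero (hδ : IsLeftCoaction δ) {b : B}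
    (hb : actionMatrix δ e b = 0) (μ : A →ₗ[k] k) :
    actionMatrix δ e (leftSlice μ (δ b)) = 0 := by
  ext a c
  rw [actionMatrix_apply, hδ.rightSlice_leftSlice, ← actionMatrix_apply, hb]
  simp

theorem IsLeftCoaction.smul_eq_zero_of_actionMatrix_eq_zero (hδ : IsLeftCoaction δ) {b : B}
    (hb : actionMatrix δ e b = 0) (y : Y) : b • y = 0 := by
  have he (c : m) : b • e c = 0 := by
    refine e.ext_elem fun a => ?_
    have h := congrArg (Coalgebra.counit (R := k)) (congrFun₂ hb a c)
    rw [actionMatrix_apply, apply_rightSlice, hδ.leftSlice_counit] at h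
    simpa using h
  exact LinearMap.congr_fun (e.ext he : Algebra.lsmul k k Y b = 0) y

theorem IsRelativeHopfModule.eq_zero_of_actionMatrix_eq_zero [Finite m]
    (hδ : IsRelativeHopfModule δ δ) {ι : B →ₗ[k] A} (hι : Function.Injective ι) {P : B}
    (hP : ∀ (μ : A →ₗ[k] k) b, leftSlice μ (δ b) * P = μ (ι b) • P)
    (hP0 : actionMatrix δ e P ≠ 0) {b : B} (hb : actionMatrix δ e b = 0) : b = 0 := by
  have := Fintype.ofFinite m
  refine hι ?_
  rw [map_zero, ← Module.forall_dual_apply_eq_zero_iff k]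
  intro μ
  have h : μ (ι b) • actionMatrix δ e P = 0 := by
    rw [← map_smul, ← hP, hδ.actionMatrix_mul, hδ.actionMatrix_leftSlice_eq_zero hb, zero_mul]
  exact (smul_eq_zero.mp h).resolve_right hP0

end ActionMatrix

section IdealCoaction

variable {k}
variable {B : Type*} [Ring B] [Algebra k B] {δ : B →ₗ[k] A ⊗[k] B} {I : Ideal B}

theorem IsLeftCoaction.actionMatrix_ne_zero {Y m : Type*} [AddCommGroup Y] [Module k Y]
    [Module B Y] [IsScalarTower k B Y] (e : Module.Basis m k Y) (hδ : IsLeftCoaction δ)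
    {P : B} (hPI : ∀ v ∈ I, ∃ μ : A →ₗ[k] k, v = leftSlice μ (δ P))
    (hI : I • (⊤ : Submodule B I) = ⊤) {π : I →ₗ[B] Y} (hπ : π ≠ 0) :
    actionMatrix δ e P ≠ 0 := by
  intro h0
  have hker : I • (⊤ : Submodule B I) ≤ LinearMap.ker π := by
    refine Submodule.smul_le.mpr fun v hv w _ => ?_
    obtain ⟨μ, rfl⟩ := hPI v hv
    rw [LinearMap.mem_ker, map_smul]
    exact hδ.smul_eq_zero_of_actionMatrix_eq_zero (hδ.actionMatrix_leftSlice_eq_zero h0 μ) _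
  exact hπ (LinearMap.ker_eq_top.mp (top_le_iff.mp (hI.ge.trans hker)))

theorem smul_top_eq_top_of_le_mul_self {R : Type*} [Ring R] {I : Ideal R} (hI : I ≤ I * I) :
    I • (⊤ : Submodule R I) = ⊤ := by
  rwa [← top_le_iff, ← Submodule.map_le_map_iff_of_injective I.subtype_injective,
    Submodule.map_smul'', Submodule.map_subtype_top, smul_eq_mul]

theorem IsRelativeHopfModule.eq_top_of_slice_mul_eq_smul [IsStablyFiniteRing A]
    [Module.Finite k B] [I.IsTwoSided] (hB : IsRelativeHopfModule δ δ) {δI : I →ₗ[k] A ⊗[k] I}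
    (hδI : IsRelativeHopfModule δ δI) (hI : I ≠ ⊥) (hII : I ≤ I * I)
    {ι : B →ₗ[k] A} (hι : Function.Injective ι) {P : B}
    (hPI : ∀ v ∈ I, ∃ μ : A →ₗ[k] k, v = leftSlice μ (δ P))
    (hP : ∀ (μ : A →ₗ[k] k) b, leftSlice μ (δ b) * P = μ (ι b) • P) : I = ⊤ := by
  have hItop := smul_top_eq_top_of_le_mul_self hII
  have : Nontrivial I := Submodule.nontrivial_iff_ne_bot.mpr hI
  have : Module.Finite k I :=
    .of_injective (I.subtype.restrictScalars k) Subtype.val_injective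
  obtain ⟨J, -, hpos, g, hg⟩ := exists_isMaximal_surjective_pi k B I
  have := finite_linearMap_of_isScalarTower k B I (B ⧸ J)
  let e := Module.finBasis k (B ⧸ J)
  let φ := Module.finBasis k (I →ₗ[B] B ⧸ J)
  obtain ⟨π, hπ⟩ := Module.finrank_pos_iff_exists_ne_zero.mp hpos
  have hP0 := hB.actionMatrix_ne_zero e hPI hItop hπ
  have hinj : Function.Injective g := by
    rw [injective_iff_map_eq_zero]
    intro v hv
    funext j
    refine hB.eq_zero_of_actionMatrix_eq_zero hι hP hP0 ?_
    exact map_eq_zero_of_surjective (U := (coactionMatrix δI e φ).toAddMonoidHom)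
      (hδI.coactionMatrix_smul e φ) (hδI.span_coactionMatrix_eq_top e φ.linearIndependent) hg
      (by simp [mul_comm]) hv j
  have := Fin.pos_iff_nonempty.mp hpos
  exact eq_top_of_bijective_of_smul_top_eq_top ⟨hinj, hg⟩ hItop

end IdealCoaction
section GroupLikeProjection

open Coalgebra HopfAlgebra

/-- `V_P` as a subspace of `A`. -/
def VPSubmodule (P : A) : Submodule k A :=
  LinearMap.range ((TensorProduct.lid k A).toLinearMap ∘ₗ
    LinearMap.applyₗ (comul (R := k) P) ∘ₗ LinearMap.rTensorHom A)

variable {k}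
variable {P : A}

theorem mem_VPSubmodule {x : A} :
    x ∈ VPSubmodule k P ↔ ∃ μ : A →ₗ[k] k, leftSlice μ (comul P) = x :=
  Iff.rfl

variable (P) in
theorem coe_VPSubmodule : (VPSubmodule k P : Set A) = VPSet k P :=
  Set.ext fun _ => exists_congr fun _ => eq_comm

variable (P) in
theorem mem_VPSubmodule_self : P ∈ VPSubmodule k P :=
  mem_VPSubmodule.mpr ⟨counit, isLeftCoaction_comul.leftSlice_counit P⟩

variable (k P) in
theorem finite_VPSubmodule : Module.Finite k (VPSubmodule k P) := by
  obtain ⟨N, hN, hPN⟩ := TensorProduct.exists_finite_submodule_right_of_setFinite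
    {comul (R := k) P} (Set.finite_singleton _)
  obtain ⟨t, ht⟩ := hPN rfl
  refine Submodule.finiteDimensional_of_le (S₂ := N) ?_
  intro x hx
  obtain ⟨μ, rfl⟩ := mem_VPSubmodule.mp hx
  rw [← ht, leftSlice_lTensor]
  exact (leftSlice μ t).2

theorem leftSlice_comul_mem_VPSubmodule (μ : A →ₗ[k] k) {x : A} (hx : x ∈ VPSubmodule k P) :
    leftSlice μ (comul x) ∈ VPSubmodule k P := by
  obtain ⟨ν, rfl⟩ := mem_VPSubmodule.mp hx
  rw [isLeftCoaction_comul.leftSlice_coaction, leftSlice_rTensor]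
  exact mem_VPSubmodule.mpr ⟨_, rfl⟩

theorem VPSubmodule_le_mul_self (hP : P * P = P) :
    VPSubmodule k P ≤ VPSubmodule k P * VPSubmodule k P := by
  intro x hx
  obtain ⟨μ, rfl⟩ := mem_VPSubmodule.mp hx
  have hmem : comul P ∈ LinearMap.range ((VPSubmodule k P).subtype.lTensor A) :=
    mem_range_lTensor_of_leftSlice_mem_range fun ν =>
      ⟨⟨_, leftSlice_comul_mem_VPSubmodule ν (mem_VPSubmodule_self P)⟩, rfl⟩
  have hcomul : comul (R := k) P = comul P * comul P := by rw [← Bialgebra.comul_mul, hP]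
  exact hcomul ▸ leftSlice_mul_mem_mul hmem hmem μ

theorem mul_mem_VPSubmodule {x v : A} (hx : x ∈ NPrSet k P) (hv : v ∈ VPSubmodule k P) :
    x * v ∈ VPSubmodule k P := by
  obtain ⟨μ, rfl⟩ := mem_VPSubmodule.mp hv
  have h : antipode k x • comul P = 1 ⊗ₜ x * comul (R := k) P := by
    rw [← antipodeCoact_tmul, ← Set.mem_ofPred_eq.mp hx, antipodeCoact_comul_mul_one_tmul,
      isLeftCoaction_comul.antipodeCoact_apply]
  rw [← leftSlice_one_tmul_mul, ← h, leftSlice_smul]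
  exact mem_VPSubmodule.mpr ⟨_, rfl⟩

theorem IsRightGroupLikeProjection.VPSet_subset_NPSet (hP : IsRightGroupLikeProjection k P) :
    VPSet k P ⊆ NPSet k P := by
  obtain ⟨-, -, hr, hl⟩ := hP
  rw [← coe_VPSubmodule]
  intro x hx
  obtain ⟨μ, rfl⟩ := mem_VPSubmodule.mp hx
  constructor
  · rw [NPlSet, Set.mem_ofPred_eq, isLeftCoaction_comul.leftSlice_coaction, ← rTensor_one_tmul_mul,
      hl, LinearMap.rTensor_tmul]
    rfl
  · rw [NPrSet, Set.mem_ofPred_eq, isLeftCoaction_comul.leftSlice_coaction, ← rTensor_mul_one_tmul,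
      hr, LinearMap.rTensor_tmul]
    rfl

namespace IsRightGroupLikeProjection

variable (hP : IsRightGroupLikeProjection k P)

include hP in
theorem mem_NPrSet_of_mem_VPSubmodule {v : A} (hv : v ∈ VPSubmodule k P) : v ∈ NPrSet k P :=
  (hP.VPSet_subset_NPSet (coe_VPSubmodule (k := k) P ▸ hv)).2

/-- `k1 + V_P`, a finite-dimensional left coideal subalgebra of `A`. -/
def VPSubalgebra : Subalgebra k A :=
  (1 ⊔ VPSubmodule k P).toSubalgebra (Submodule.mem_sup_left (Submodule.one_le.mp le_rfl))
    fun x y hx hy => by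
      have hVV : VPSubmodule k P * VPSubmodule k P ≤ VPSubmodule k P :=
        Submodule.mul_le.mpr fun v hv w hw =>
          mul_mem_VPSubmodule (hP.mem_NPrSet_of_mem_VPSubmodule hv) hw
      have hmul : (1 ⊔ VPSubmodule k P) * (1 ⊔ VPSubmodule k P) ≤ 1 ⊔ VPSubmodule k P := by
        rw [Submodule.sup_mul, Submodule.mul_sup (VPSubmodule k P), one_mul, mul_one]
        exact sup_le le_rfl (sup_le le_sup_right (hVV.trans le_sup_right))
      exact hmul (Submodule.mul_mem_mul hx hy)

variable {hP}

theorem mem_VPSubalgebra_of_mem_VPSubmodule {x : A} (hx : x ∈ VPSubmodule k P) :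
    x ∈ hP.VPSubalgebra :=
  Submodule.mem_sup_right hx

theorem exists_of_mem_VPSubalgebra {x : A} (hx : x ∈ hP.VPSubalgebra) :
    ∃ (c : k), ∃ v ∈ VPSubmodule k P, algebraMap k A c + v = x := by
  obtain ⟨y, hy, v, hv, rfl⟩ := Submodule.mem_sup.mp hx
  obtain ⟨c, rfl⟩ := Submodule.mem_one.mp hy
  exact ⟨c, v, hv, rfl⟩

variable (hP) in
theorem finite_VPSubalgebra : Module.Finite k hP.VPSubalgebra := by
  have := finite_VPSubmodule k P
  exact Module.Finite.iff_fg.mpr (Submodule.FG.sup ⟨{1}, by simp [Submodule.one_eq_span]⟩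
    (Module.Finite.iff_fg.mp this))

theorem mem_NPrSet_of_mem_VPSubalgebra {x : A} (hx : x ∈ hP.VPSubalgebra) : x ∈ NPrSet k P := by
  obtain ⟨c, v, hv, rfl⟩ := exists_of_mem_VPSubalgebra hx
  rw [NPrSet, Set.mem_ofPred_eq, map_add, add_mul, TensorProduct.add_tmul,
    Set.mem_ofPred_eq.mp (hP.mem_NPrSet_of_mem_VPSubmodule hv), Bialgebra.comul_algebraMap]
  simp [Algebra.TensorProduct.algebraMap_apply]

theorem leftSlice_comul_mem_VPSubalgebra (μ : A →ₗ[k] k) {x : A} (hx : x ∈ hP.VPSubalgebra) :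
    leftSlice μ (comul x) ∈ hP.VPSubalgebra := by
  obtain ⟨c, v, hv, rfl⟩ := exists_of_mem_VPSubalgebra hx
  rw [map_add, map_add]
  refine add_mem ?_ (mem_VPSubalgebra_of_mem_VPSubmodule (leftSlice_comul_mem_VPSubmodule μ hv))
  simpa [Algebra.TensorProduct.algebraMap_apply] using
    hP.VPSubalgebra.smul_mem (one_mem _) (μ (algebraMap k A c))

variable (hP) in
/-- `V_P` as an ideal of `k1 + V_P`. -/
def VPIdeal : Ideal hP.VPSubalgebra :=
  { (VPSubmodule k P).comap hP.VPSubalgebra.val.toLinearMap with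
    smul_mem' b _ hv := mul_mem_VPSubmodule (mem_NPrSet_of_mem_VPSubalgebra b.2) hv }

theorem mem_VPIdeal {b : hP.VPSubalgebra} : b ∈ hP.VPIdeal ↔ (b : A) ∈ VPSubmodule k P :=
  Iff.rfl

instance : hP.VPIdeal.IsTwoSided where
  mul_mem_of_left {v} b hv := by
    obtain ⟨c, w, hw, hb⟩ := exists_of_mem_VPSubalgebra b.2
    change (v : A) * b ∈ VPSubmodule k P
    rw [← hb, mul_add, ← Algebra.commutes, ← Algebra.smul_def]
    exact add_mem (Submodule.smul_mem _ _ hv)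
      (mul_mem_VPSubmodule (mem_NPrSet_of_mem_VPSubalgebra v.2) hw)

variable (hP) in
theorem VPIdeal_le_mul_self : hP.VPIdeal ≤ hP.VPIdeal * hP.VPIdeal := by
  have hmul : VPSubmodule k P * VPSubmodule k P ≤
      ((hP.VPIdeal * hP.VPIdeal).restrictScalars k).map hP.VPSubalgebra.val.toLinearMap :=
    Submodule.mul_le.mpr fun v hv w hw =>
      ⟨⟨v, mem_VPSubalgebra_of_mem_VPSubmodule hv⟩ * ⟨w, mem_VPSubalgebra_of_mem_VPSubmodule hw⟩,
        Ideal.mul_mem_mul hv hw, rfl⟩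
  intro b hb
  obtain ⟨b', hb', h⟩ := hmul (VPSubmodule_le_mul_self hP.2.1 hb)
  exact Subtype.ext h ▸ hb'

variable (hP) in
theorem VPIdeal_eq_top [IsStablyFiniteRing A] : hP.VPIdeal = ⊤ := by
  let ιB : hP.VPSubalgebra →ₗ[k] A := hP.VPSubalgebra.val.toLinearMap
  let ιI : hP.VPIdeal →ₗ[k] A := ιB ∘ₗ hP.VPIdeal.subtype.restrictScalars k
  have hιB : Function.Injective ιB := Subtype.val_injective
  have hιI : Function.Injective ιI := hιB.comp Subtype.val_injective
  have hB (b) : comul (ιB b) ∈ LinearMap.range (ιB.lTensor A) :=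
    mem_range_lTensor_of_leftSlice_mem_range fun μ =>
      ⟨⟨_, leftSlice_comul_mem_VPSubalgebra μ b.2⟩, rfl⟩
  have hI (v) : comul (ιI v) ∈ LinearMap.range (ιI.lTensor A) :=
    mem_range_lTensor_of_leftSlice_mem_range fun μ =>
      have hmem := leftSlice_comul_mem_VPSubmodule μ v.2
      ⟨⟨⟨_, mem_VPSubalgebra_of_mem_VPSubmodule hmem⟩, hmem⟩, rfl⟩
  have hslice (μ : A →ₗ[k] k) (b) :
      ιB (leftSlice μ (restrictCoaction comul ιB hιB hB b)) = leftSlice μ (comul (b : A)) :=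
    apply_leftSlice_restrictCoaction μ b
  let P' : hP.VPSubalgebra := ⟨P, mem_VPSubalgebra_of_mem_VPSubmodule (mem_VPSubmodule_self P)⟩
  have hbot : hP.VPIdeal ≠ ⊥ := fun h => by
    have hP' : P' ∈ hP.VPIdeal := mem_VPSubmodule_self P
    rw [h, Ideal.mem_bot] at hP'
    exact hP.1 (congrArg Subtype.val hP')
  have := hP.finite_VPSubalgebra
  refine (isRelativeHopfModule_restrictCoaction hιB hB hιB hB
    fun _ _ => rfl).eq_top_of_slice_mul_eq_smul
    (isRelativeHopfModule_restrictCoaction hιB hB hιI hI fun _ _ => rfl) hbot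
    hP.VPIdeal_le_mul_self hιB (P := P') (fun v hv => ?_) fun μ b => hιB ?_
  · obtain ⟨μ, hμ⟩ := mem_VPSubmodule.mp (mem_VPIdeal.mp hv)
    exact ⟨μ, hιB (hμ.symm.trans (hslice μ P').symm)⟩
  · calc ιB (leftSlice μ (restrictCoaction comul ιB hιB hB b) * P')
        = leftSlice μ (comul (b : A)) * P := congrArg (· * P) (hslice μ b)
      _ = μ (b : A) • P := by
          rw [← leftSlice_mul_one_tmul, Set.mem_ofPred_eq.mp (mem_NPrSet_of_mem_VPSubalgebra b.2),
            leftSlice_tmul]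

include hP in
theorem one_mem_VPSubmodule [IsStablyFiniteRing A] : (1 : A) ∈ VPSubmodule k P :=
  mem_VPIdeal.mp (hP.VPIdeal_eq_top ▸ Submodule.mem_top : (1 : hP.VPSubalgebra) ∈ hP.VPIdeal)

end IsRightGroupLikeProjection

end GroupLikeProjection

theorem isStablyFiniteRing_of_forall_pos {S : Type*} [Ring S]
    (h : ∀ n : ℕ, 0 < n → ∀ x y : Matrix (Fin n) (Fin n) S, x * y = 1 → y * x = 1) :
    IsStablyFiniteRing S :=
  ⟨fun n => ⟨fun {x y} hxy => by
    obtain rfl | hn := Nat.eq_zero_or_pos n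
    · exact Subsingleton.elim _ _
    · exact h n hn x y hxy⟩⟩

theorem statement5_general [IsStablyFiniteRing A] {P : A} (hP : IsRightGroupLikeProjection k P) :
    NPSet k P = VPSet k P := by
  refine Set.Subset.antisymm (fun x hx => ?_) hP.VPSet_subset_NPSet
  rw [← coe_VPSubmodule]
  simpa using mul_mem_VPSubmodule hx.2 hP.one_mem_VPSubmodule

/-- Theorem: if `A` is weakly finite then `N_P = V_P` for every right group-like
projection `P ∈ A`. -/
theorem statement5
    (hS : Function.Bijective (HopfAlgebra.antipode (R := k) : A →ₗ[k] A))
    (hwf : ∀ n : ℕ, 0 < n → ∀ x y : Matrix (Fin n) (Fin n) A, x * y = 1 → y * x = 1)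
    (P : A) (hP : IsRightGroupLikeProjection k P) :
    NPSet k P = VPSet k P :=
  have := isStablyFiniteRing_of_forall_pos hwf
  statement5_general k hP
end
end

section
/- Let A be a Hopf algebra over a field k with bijective antipode and let P ∈ A be a right group-like projection. Then the left coideal V_P is faithful as a right ideal over N_P^l, faithful as a left ideal over N_P^r, and faithful both as a left and as a right ideal over N_P; in particular, if x ∈ N_P^r satisfies x·v = 0 for all v ∈ V_P, then x = 0. -/
/-!
Applying `ε ⊗ id` to `Δ(P)(1 ⊗ P) = P ⊗ P` gives `P = P² = ε(P) P`, so `ε(P) = 1`. Write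
`Δ(P) = ∑ P₁ ⊗ P₂` with all `P₂` in `V_P`. If `V_P x = 0`, then `ε(P) x = ∑ S(P₁) P₂ x = 0`.
If `x V_P = 0`, then `ε(P) S(x) = ∑ P₁ S(P₂) S(x) = ∑ P₁ S(x P₂) = 0`, and `S` is injective.
-/

open scoped TensorProduct

noncomputable section

variable (k : Type*) [Field k] {A : Type*} [Ring A] [HopfAlgebra k A]

open Coalgebra HopfAlgebra

lemma mul_self_eq_counit_smul {R B : Type*} [CommSemiring R] [Semiring B] [Bialgebra R B] {p : B}
    (hp : comul (R := R) p * ((1 : B) ⊗ₜ[R] p) = p ⊗ₜ[R] p) :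
    p * p = counit (R := R) p • p := by
  let counitId : B ⊗[R] B →ₐ[R] B :=
    (Algebra.TensorProduct.lid R B : R ⊗[R] B →ₐ[R] B).comp
      (Algebra.TensorProduct.rTensor B (Bialgebra.counitAlgHom R B))
  have counitId_comul : counitId (comul p) = p := by
    change TensorProduct.lid R B ((counit (R := R)).rTensor B (comul p)) = p
    rw [rTensor_counit_comul, TensorProduct.lid_tmul, one_smul]
  calc p * p = counitId (comul p * (1 : B) ⊗ₜ[R] p) := by
        rw [map_mul, counitId_comul]
        simp [counitId]
    _ = counit (R := R) p • p := by
        rw [hp]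
        simp [counitId]

lemma IsRightGroupLikeProjection.counit_eq_one {P : A} (hP : IsRightGroupLikeProjection k P) :
    counit (R := k) P = 1 := by
  obtain ⟨hne, hidem, hcomul, -⟩ := hP
  have h : counit (R := k) P • P = (1 : k) • P := by
    rw [← mul_self_eq_counit_smul hcomul, hidem, one_smul]
  exact smul_left_injective k hne h

lemma exists_repr_right_mem_VPSet (P : A) :
    ∃ r : Repr k P (Module.Basis.ofVectorSpaceIndex k A), ∀ i, r.right i ∈ VPSet k P := by
  classical
  let e := Module.Basis.ofVectorSpace k A
  let c := TensorProduct.equivFinsuppOfBasisLeft e (comul (R := k) P)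
  have sum_eq : ∑ i ∈ c.support, e i ⊗ₜ[k] c i = comul (R := k) P :=
    (TensorProduct.equivFinsuppOfBasisLeft_symm_apply e c).symm.trans
      (LinearEquiv.symm_apply_apply _ _)
  exact ⟨⟨c.support, e, c, sum_eq⟩,
    fun i => ⟨e.coord i, TensorProduct.equivFinsuppOfBasisLeft_apply e _ i⟩⟩

lemma counit_smul_eq_zero_of_forall_VPSet_mul_eq_zero {P x : A}
    (hx : ∀ v ∈ VPSet k P, v * x = 0) : counit (R := k) P • x = 0 := by
  obtain ⟨r, hr⟩ := exists_repr_right_mem_VPSet k P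
  calc counit (R := k) P • x
      = (∑ i ∈ r.index, antipode k (r.left i) * r.right i) * x := by
        rw [sum_antipode_mul_eq_smul, smul_one_mul]
    _ = ∑ i ∈ r.index, antipode k (r.left i) * (r.right i * x) := by
        simp only [Finset.sum_mul, mul_assoc]
    _ = 0 := Finset.sum_eq_zero fun i _ => by rw [hx _ (hr i), mul_zero]

lemma counit_smul_antipode_eq_zero_of_forall_mul_VPSet_eq_zero {P x : A}
    (hx : ∀ v ∈ VPSet k P, x * v = 0) : counit (R := k) P • antipode k x = 0 := by
  obtain ⟨r, hr⟩ := exists_repr_right_mem_VPSet k P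
  calc counit (R := k) P • antipode k x
      = (∑ i ∈ r.index, r.left i * antipode k (r.right i)) * antipode k x := by
        rw [sum_mul_antipode_eq_smul, smul_one_mul]
    _ = ∑ i ∈ r.index, r.left i * antipode k (x * r.right i) := by
        simp only [Finset.sum_mul, mul_assoc, antipode_mul_antidistrib]
    _ = 0 := Finset.sum_eq_zero fun i _ => by rw [hx _ (hr i), map_zero, mul_zero]

theorem statement9_general
    (hS : Function.Injective (antipode k : A →ₗ[k] A))
    {P : A} (hP : counit (R := k) P ≠ 0) (x : A) :
    ((∀ v ∈ VPSet k P, v * x = 0) → x = 0) ∧ ((∀ v ∈ VPSet k P, x * v = 0) → x = 0) := by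
  refine ⟨fun hx => ?_, fun hx => ?_⟩
  · exact (smul_eq_zero_iff_right hP).mp (counit_smul_eq_zero_of_forall_VPSet_mul_eq_zero k hx)
  · have antipode_eq_zero : antipode k x = 0 := (smul_eq_zero_iff_right hP).mp
      (counit_smul_antipode_eq_zero_of_forall_mul_VPSet_eq_zero k hx)
    exact (map_eq_zero_iff _ hS).mp antipode_eq_zero

/-- Theorem: `V_P` is faithful as a right ideal over `N_P^l` (`V_P·x = 0 ⇒ x = 0`),
faithful as a left ideal over `N_P^r` (`x·V_P = 0 ⇒ x = 0`), and faithful as a left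
and as a right ideal over `N_P`. -/
theorem statement9
    (hS : Function.Bijective (HopfAlgebra.antipode (R := k) : A →ₗ[k] A))
    (P : A) (hP : IsRightGroupLikeProjection k P) :
    (∀ x ∈ NPlSet k P, (∀ v ∈ VPSet k P, v * x = 0) → x = 0) ∧
    (∀ x ∈ NPrSet k P, (∀ v ∈ VPSet k P, x * v = 0) → x = 0) ∧
    (∀ x ∈ NPSet k P,
      ((∀ v ∈ VPSet k P, x * v = 0) → x = 0) ∧
      ((∀ v ∈ VPSet k P, v * x = 0) → x = 0)) := by
  have key := statement9_general k hS.injective (hP.counit_eq_one ▸ one_ne_zero)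
  exact ⟨fun x _ => (key x).1, fun x _ => (key x).2, fun x _ => (key x).symm⟩
end
end

section
/- Let A be a Hopf algebra over a field k with bijective antipode and let P ∈ A be a right group-like projection. Then for every x ∈ N_P one has xP = ε(x)P = Px; consequently P is a minimal central idempotent of N_P and ker(ε|_{N_P}) = (1 − P)·N_P. In particular, if P₁, P₂ are right group-like projections with N_{P₁} = N_{P₂}, then P₁ = P₂. -/
open scoped TensorProduct

noncomputable section

variable (k : Type*) [Field k] {A : Type*} [Ring A] [HopfAlgebra k A]

/-!
Since `ε ⊗ id` is an algebra homomorphism and a left inverse of `Δ`, it turns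
`Δ(x)(1 ⊗ P) = x ⊗ P` into `xP = ε(x)P`. So `N_P` acts on `P` from both sides through the
character `ε`, and `ε(P) = 1` because `P` is a nonzero idempotent. Every idempotent of `N_P`
below `P` is then a scalar multiple of `P`, the kernel of `ε` on `N_P` is the part killed by `P`,
and two right group-like projections with `N_P = N_Q` satisfy `P = PQ = Q`.
-/

section Bialgebra

open Coalgebra

variable (R : Type*) [CommSemiring R] {B : Type*} [Semiring B] [Bialgebra R B]

variable (B) in
/-- The algebra homomorphism `ε ⊗ id : B ⊗ B → B`, with `R ⊗ B` identified with `B`. -/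
def counitTensorId : B ⊗[R] B →ₐ[R] B :=
  (Algebra.TensorProduct.lid R B).toAlgHom.comp
    (Algebra.TensorProduct.map (Bialgebra.counitAlgHom R B) (AlgHom.id R B))

lemma counitTensorId_tmul (a b : B) : counitTensorId R B (a ⊗ₜ b) = counit (R := R) a • b :=
  rfl

lemma counitTensorId_comul (x : B) : counitTensorId R B (comul x) = x :=
  calc counitTensorId R B (comul x)
      = TensorProduct.lid R B (counit.rTensor B (comul x)) := rfl
    _ = x := by rw [rTensor_counit_comul, TensorProduct.lid_tmul, one_smul]

variable {R}

lemma mul_eq_counit_smul_of_comul_mul_eq {x a p q : B}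
    (h : comul (R := R) x * (1 ⊗ₜ p) = a ⊗ₜ q) : x * p = counit (R := R) a • q := by
  simpa only [map_mul, counitTensorId_comul, counitTensorId_tmul, Bialgebra.counit_one, one_smul]
    using congrArg (counitTensorId R B) h

lemma mul_eq_counit_smul_of_mul_comul_eq {x a p q : B}
    (h : (1 ⊗ₜ p) * comul (R := R) x = a ⊗ₜ q) : p * x = counit (R := R) a • q := by
  simpa only [map_mul, counitTensorId_comul, counitTensorId_tmul, Bialgebra.counit_one, one_smul]
    using congrArg (counitTensorId R B) h

variable (R)

/-- The subalgebra `N_P` of a bialgebra over an arbitrary commutative semiring, for an arbitrary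
element `P`; over a Hopf algebra its underlying set is `NPSet`. -/
def NPSubalgebra (P : B) : Subalgebra R B where
  carrier := {x | (1 ⊗ₜ P) * comul (R := R) x = x ⊗ₜ P ∧ comul (R := R) x * (1 ⊗ₜ P) = x ⊗ₜ P}
  mul_mem' {x y} hx hy := by
    constructor
    · calc (1 ⊗ₜ P) * comul (R := R) (x * y)
          = (x ⊗ₜ 1) * ((1 ⊗ₜ P) * comul (R := R) y) := by
            rw [Bialgebra.comul_mul, ← mul_assoc, hx.1, ← mul_assoc,
              Algebra.TensorProduct.tmul_mul_tmul, mul_one, one_mul]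
        _ = (x * y) ⊗ₜ P := by rw [hy.1, Algebra.TensorProduct.tmul_mul_tmul, one_mul]
    · calc comul (R := R) (x * y) * (1 ⊗ₜ P)
          = (comul (R := R) x * (1 ⊗ₜ P)) * (y ⊗ₜ 1) := by
            rw [Bialgebra.comul_mul, mul_assoc, hy.2, mul_assoc,
              Algebra.TensorProduct.tmul_mul_tmul, mul_one, one_mul]
        _ = (x * y) ⊗ₜ P := by rw [hx.2, Algebra.TensorProduct.tmul_mul_tmul, mul_one]
  add_mem' {x y} hx hy := by
    constructor
    · rw [map_add, mul_add, hx.1, hy.1, TensorProduct.add_tmul]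
    · rw [map_add, add_mul, hx.2, hy.2, TensorProduct.add_tmul]
  algebraMap_mem' r := by simp [Algebra.TensorProduct.algebraMap_apply]

/-- A right group-like projection in a bialgebra over an arbitrary commutative semiring. The
identities `Δ(P)(1 ⊗ P) = P ⊗ P = (1 ⊗ P)Δ(P)` are encoded as `P ∈ N_P`. -/
structure IsRightGroupLikeIdempotent (P : B) : Prop where
  ne_zero : P ≠ 0
  isIdempotentElem : IsIdempotentElem P
  mem_NPSubalgebra : P ∈ NPSubalgebra R P

variable {R} {P Q x e : B}

lemma counit_eq_zero_or_one_of_isIdempotentElem [IsLeftCancelMulZero R]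
    (he : IsIdempotentElem e) : counit (R := R) e = 0 ∨ counit (R := R) e = 1 :=
  IsIdempotentElem.iff_eq_zero_or_one.mp (he.map (Bialgebra.counitAlgHom R B))

namespace NPSubalgebra

lemma mul_self_eq_counit_smul (hx : x ∈ NPSubalgebra R P) : x * P = counit (R := R) x • P :=
  mul_eq_counit_smul_of_comul_mul_eq hx.2

lemma self_mul_eq_counit_smul (hx : x ∈ NPSubalgebra R P) : P * x = counit (R := R) x • P :=
  mul_eq_counit_smul_of_mul_comul_eq hx.1

lemma self_commute (hx : x ∈ NPSubalgebra R P) : Commute P x :=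
  (self_mul_eq_counit_smul hx).trans (mul_self_eq_counit_smul hx).symm

lemma eq_zero_or_eq_self [IsLeftCancelMulZero R] (heN : e ∈ NPSubalgebra R P)
    (he : IsIdempotentElem e) (heP : e * P = e) : e = 0 ∨ e = P := by
  have he_smul : e = counit (R := R) e • P :=
    heP.symm.trans (mul_self_eq_counit_smul heN)
  rcases counit_eq_zero_or_one_of_isIdempotentElem (R := R) he with h | h
  · left
    rw [he_smul, h, zero_smul]
  · right
    rw [he_smul, h, one_smul]

end NPSubalgebra

namespace IsRightGroupLikeIdempotent

variable [IsLeftCancelMulZero R]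

lemma counit_eq_one (hP : IsRightGroupLikeIdempotent R P) : counit (R := R) P = 1 := by
  refine (counit_eq_zero_or_one_of_isIdempotentElem hP.isIdempotentElem).resolve_left fun h ↦
    hP.ne_zero ?_
  calc P = P * P := hP.isIdempotentElem.eq.symm
    _ = counit (R := R) P • P := NPSubalgebra.mul_self_eq_counit_smul hP.mem_NPSubalgebra
    _ = 0 := by rw [h, zero_smul]

lemma eq_of_NPSubalgebra_eq (hP : IsRightGroupLikeIdempotent R P)
    (hQ : IsRightGroupLikeIdempotent R Q) (h : NPSubalgebra R P = NPSubalgebra R Q) : P = Q := by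
  have hQP : Q ∈ NPSubalgebra R P := h ▸ hQ.mem_NPSubalgebra
  have hPQ : P ∈ NPSubalgebra R Q := h ▸ hP.mem_NPSubalgebra
  calc P = P * Q := by
        rw [NPSubalgebra.self_mul_eq_counit_smul hQP, hQ.counit_eq_one, one_smul]
    _ = Q := by rw [NPSubalgebra.mul_self_eq_counit_smul hPQ, hP.counit_eq_one, one_smul]

end IsRightGroupLikeIdempotent

end Bialgebra

section Ring

open Coalgebra

variable {R : Type*} [CommRing R] [NoZeroDivisors R] {B : Type*} [Ring B] [Bialgebra R B]
  {P : B}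

lemma IsRightGroupLikeIdempotent.mem_NPSubalgebra_and_counit_eq_zero_iff
    (hP : IsRightGroupLikeIdempotent R P) (x : B) :
    x ∈ NPSubalgebra R P ∧ counit (R := R) x = 0 ↔ ∃ y ∈ NPSubalgebra R P, x = (1 - P) * y := by
  constructor
  · rintro ⟨hx, hεx⟩
    refine ⟨x, hx, ?_⟩
    rw [sub_mul, one_mul, NPSubalgebra.self_mul_eq_counit_smul hx, hεx, zero_smul, sub_zero]
  · rintro ⟨y, hy, rfl⟩
    refine ⟨mul_mem (sub_mem (one_mem _) hP.mem_NPSubalgebra) hy, ?_⟩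
    rw [Bialgebra.counit_mul, map_sub, Bialgebra.counit_one, hP.counit_eq_one, sub_self, zero_mul]

theorem statement11_general (hP : IsRightGroupLikeIdempotent R P) :
    (∀ x ∈ NPSubalgebra R P, x * P = counit (R := R) x • P ∧ P * x = counit (R := R) x • P) ∧
    (P ∈ NPSubalgebra R P ∧ IsIdempotentElem P ∧ ∀ x ∈ NPSubalgebra R P, Commute P x) ∧
    (∀ e ∈ NPSubalgebra R P, IsIdempotentElem e → e * P = e → e = 0 ∨ e = P) ∧
    (∀ x, x ∈ NPSubalgebra R P ∧ counit (R := R) x = 0 ↔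
      ∃ y ∈ NPSubalgebra R P, x = (1 - P) * y) ∧
    (∀ P₁ P₂ : B, IsRightGroupLikeIdempotent R P₁ → IsRightGroupLikeIdempotent R P₂ →
      NPSubalgebra R P₁ = NPSubalgebra R P₂ → P₁ = P₂) :=
  ⟨fun _ hx ↦ ⟨NPSubalgebra.mul_self_eq_counit_smul hx, NPSubalgebra.self_mul_eq_counit_smul hx⟩,
    ⟨hP.mem_NPSubalgebra, hP.isIdempotentElem, fun _ ↦ NPSubalgebra.self_commute⟩,
    fun _ ↦ NPSubalgebra.eq_zero_or_eq_self,
    hP.mem_NPSubalgebra_and_counit_eq_zero_iff,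
    fun _ _ h₁ h₂ ↦ h₁.eq_of_NPSubalgebra_eq h₂⟩

end Ring

lemma coe_NPSubalgebra (P : A) : (NPSubalgebra k P : Set A) = NPSet k P :=
  rfl

variable {k} in
lemma IsRightGroupLikeProjection.isRightGroupLikeIdempotent {P : A}
    (hP : IsRightGroupLikeProjection k P) : IsRightGroupLikeIdempotent k P :=
  ⟨hP.1, hP.2.1, hP.2.2.2, hP.2.2.1⟩

/-- Theorem: for every `x ∈ N_P` one has `xP = ε(x)P = Px`; `P` is a minimal central
idempotent of `N_P` and `ker(ε|_{N_P}) = (1 - P)N_P`; and right group-like projections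
with the same `N_P` coincide. -/
theorem statement11
    (hS : Function.Bijective (HopfAlgebra.antipode (R := k) : A →ₗ[k] A))
    (P : A) (hP : IsRightGroupLikeProjection k P) :
    (∀ x ∈ NPSet k P, x * P = Coalgebra.counit (R := k) x • P ∧
      P * x = Coalgebra.counit (R := k) x • P) ∧
    -- `P` is a minimal central idempotent of `N_P`
    (P ∈ NPSet k P ∧ P * P = P ∧ (∀ x ∈ NPSet k P, P * x = x * P)) ∧
    (∀ e ∈ NPSet k P, e * e = e → (∀ x ∈ NPSet k P, e * x = x * e) → e * P = e →
      e = 0 ∨ e = P) ∧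
    -- `ker(ε|_{N_P}) = (1 - P)·N_P`
    (∀ x ∈ NPSet k P, (Coalgebra.counit (R := k) x = 0 ↔
      ∃ y ∈ NPSet k P, x = (1 - P) * y)) ∧
    -- injectivity of `P ↦ N_P`
    (∀ P₁ P₂ : A, IsRightGroupLikeProjection k P₁ → IsRightGroupLikeProjection k P₂ →
      NPSet k P₁ = NPSet k P₂ → P₁ = P₂) := by
  obtain ⟨hmul, hcentral, hmin, hker, hinj⟩ :=
    statement11_general hP.isRightGroupLikeIdempotent
  exact ⟨hmul, hcentral, fun e heN he _ ↦ hmin e heN he,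
    fun x hx ↦ (and_iff_right hx).symm.trans (hker x),
    fun P₁ P₂ h₁ h₂ h ↦ hinj P₁ P₂ h₁.isRightGroupLikeIdempotent h₂.isRightGroupLikeIdempotent
      (SetLike.coe_injective (by rwa [coe_NPSubalgebra, coe_NPSubalgebra]))⟩
end
end

section
/- Let A be a Hopf algebra over a field k with bijective antipode, P ∈ A a right group-like projection and N ⊆ A a left coideal subalgebra such that P ∈ N and xP = Px = ε(x)P for all x ∈ N (i.e. P is a counital two-sided integral for N). Then N ⊆ N_P; that is, N_P is the maximal left coideal subalgebra for which P is a counital two-sided integral. -/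
open scoped TensorProduct

noncomputable section

variable (k : Type*) [Field k] {A : Type*} [Ring A] [HopfAlgebra k A]

/-!
On `A ⊗ N`, left or right multiplication by `1 ⊗ P` acts as `id ⊗ ε(·)P`, because `P` is an integral
for `N`. Since `Δ` maps `N` into `A ⊗ N`, the counit axiom `(id ⊗ ε)Δ = id` turns the product of
`1 ⊗ P` and `Δ(x)` into `x ⊗ P`.
-/

section TensorProduct

variable {R M Q L : Type*} [CommSemiring R] [AddCommMonoid M] [Module R M] [AddCommMonoid Q]
  [Module R Q] [AddCommMonoid L] [Module R L]

theorem lTensor_apply_eq_of_eqOn_of_mem_range {N : Submodule R M} {f g : M →ₗ[R] Q}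
    (hfg : Set.EqOn f g N) {t : L ⊗[R] M} (ht : t ∈ LinearMap.range (N.subtype.lTensor L)) :
    f.lTensor L t = g.lTensor L t := by
  obtain ⟨u, rfl⟩ := ht
  have hcomp : f ∘ₗ N.subtype = g ∘ₗ N.subtype := LinearMap.ext fun y => hfg y.2
  rw [← LinearMap.lTensor_comp_apply, ← LinearMap.lTensor_comp_apply, hcomp]

end TensorProduct

section Coalgebra

variable {R C M : Type*} [CommSemiring R] [AddCommMonoid C] [Module R C] [Coalgebra R C]
  [AddCommMonoid M] [Module R M]

theorem lTensor_toSpanSingleton_comp_counit_comul (m : M) (x : C) :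
    (LinearMap.toSpanSingleton R M m ∘ₗ Coalgebra.counit).lTensor C (Coalgebra.comul x) =
      x ⊗ₜ[R] m := by
  rw [LinearMap.lTensor_comp_apply, Coalgebra.lTensor_counit_comul, LinearMap.lTensor_tmul,
    LinearMap.toSpanSingleton_apply_one]

theorem lTensor_comul_eq_tmul_of_eq_counit_smul {N : Submodule R C} {f : C →ₗ[R] M} {m : M}
    (hf : ∀ y ∈ N, f y = Coalgebra.counit (R := R) y • m) {x : C}
    (hx : Coalgebra.comul x ∈ LinearMap.range (N.subtype.lTensor C)) :
    f.lTensor C (Coalgebra.comul x) = x ⊗ₜ[R] m :=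
  (lTensor_apply_eq_of_eqOn_of_mem_range
      (g := LinearMap.toSpanSingleton R M m ∘ₗ Coalgebra.counit) hf hx).trans
    (lTensor_toSpanSingleton_comp_counit_comul m x)

end Coalgebra

section Algebra

variable {R B C : Type*} [CommSemiring R] [Semiring B] [Algebra R B] [Semiring C] [Algebra R C]

theorem one_tmul_mul_eq_lTensor_mulLeft (c : C) (t : B ⊗[R] C) :
    ((1 : B) ⊗ₜ[R] c) * t = (LinearMap.mulLeft R c).lTensor B t := by
  rw [← LinearMap.mulLeft_apply (R := R), LinearMap.mulLeft_tmul, LinearMap.mulLeft_one,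
    LinearMap.lTensor]

theorem mul_one_tmul_eq_lTensor_mulRight (c : C) (t : B ⊗[R] C) :
    t * ((1 : B) ⊗ₜ[R] c) = (LinearMap.mulRight R c).lTensor B t := by
  rw [← LinearMap.mulRight_apply (R := R), LinearMap.mulRight_tmul, LinearMap.mulRight_one,
    LinearMap.lTensor]

end Algebra

theorem statement12_general {R B : Type*} [CommSemiring R] [Semiring B] [Algebra R B]
    [Coalgebra R B] {N : Submodule R B}
    (hN : ∀ x ∈ N, Coalgebra.comul x ∈ LinearMap.range (N.subtype.lTensor B)) {P : B}
    (hint : ∀ x ∈ N, x * P = Coalgebra.counit (R := R) x • P ∧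
      P * x = Coalgebra.counit (R := R) x • P) {x : B} (hx : x ∈ N) :
    ((1 : B) ⊗ₜ[R] P) * Coalgebra.comul x = x ⊗ₜ[R] P ∧
      Coalgebra.comul x * ((1 : B) ⊗ₜ[R] P) = x ⊗ₜ[R] P := by
  rw [one_tmul_mul_eq_lTensor_mulLeft, mul_one_tmul_eq_lTensor_mulRight]
  exact ⟨lTensor_comul_eq_tmul_of_eq_counit_smul (fun y hy => (hint y hy).2) (hN x hx),
    lTensor_comul_eq_tmul_of_eq_counit_smul (fun y hy => (hint y hy).1) (hN x hx)⟩

/-- Theorem: if `N` is a left coideal subalgebra for which the right group-like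
projection `P` is a counital two-sided integral, then `N ⊆ N_P`. -/
theorem statement12
    (hS : Function.Bijective (HopfAlgebra.antipode (R := k) : A →ₗ[k] A))
    (P : A) (hP : IsRightGroupLikeProjection k P)
    (N : Subalgebra k A) (hN : IsLeftCoidealSubalgebra k N) (hPN : P ∈ N)
    (hint : ∀ x ∈ N, x * P = Coalgebra.counit (R := k) x • P ∧
      P * x = Coalgebra.counit (R := k) x • P) :
    (N : Set A) ⊆ NPSet k P :=
  fun _ hx => statement12_general hN hint hx
end
end
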